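/- For L ≥ 2, every f_L ∈ Y_{n₁,…,n_{L−1}} can be equivalently represented in normalized form: there exist b^(1) ∈ ℝ^{n₁}, matrices A^(ℓ) ∈ ℝ^{n_ℓ×n_{ℓ−1}}, vectors b^(ℓ) ∈ ℝ^{n_ℓ}, sign vectors s^(ℓ) ∈ {−1, 0, 1}^{n_ℓ} for ℓ = 2, …, L−1, and A^(L) ∈ ℝ^{1×n_{L−1}}, c^(L), b^(L) ∈ ℝ such that, with F₁(t) = t·𝟙 + b^(1) (where 𝟙 = (1, …, 1)ᵀ ∈ ℝ^{n₁}) and F_ℓ(t) = A^(ℓ)·σ(F_{ℓ−1}(t)) + t·s^(ℓ) + b^(ℓ) for ℓ = 2, …, L−1, one has f_L(t) = A^(L)·σ(F_{L−1}(t)) + t·c^(L) + b^(L) for all t ∈ ℝ. -/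

import Mathlib

/-- The ReLU function `σ(x) = max(x,0)`. -/
noncomputable def relu (x : ℝ) : ℝ := max x 0

/-- `f` belongs to the deep ReLU network class `Y_{n₁,…,n_{L−1}}` with `L−1` hidden
layers of widths `n 1, …, n (L−1)` (input and output dimension `1`). -/
def IsDeepReLU (L : ℕ) (n : ℕ → ℕ) (f : ℝ → ℝ) : Prop :=
  ∃ (F : (ℓ : ℕ) → ℝ → Fin (n ℓ) → ℝ)
    (A1 : Fin (n 1) → ℝ)
    (A : (ℓ : ℕ) → Fin (n ℓ) → Fin (n (ℓ - 1)) → ℝ)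
    (b c : (ℓ : ℕ) → Fin (n ℓ) → ℝ)
    (AL : Fin (n (L - 1)) → ℝ) (cL bL : ℝ),
    (∀ t i, F 1 t i = t * A1 i + b 1 i) ∧
    (∀ ℓ, 2 ≤ ℓ → ℓ ≤ L - 1 → ∀ t i,
      F ℓ t i = (∑ k, A ℓ i k * relu (F (ℓ - 1) t k)) + t * c ℓ i + b ℓ i) ∧
    (∀ t, f t = (∑ k, AL k * relu (F (L - 1) t k)) + t * cL + bL)

/-!
A network sees a hidden layer `X` only through the span of `1`, `t` and the functions `σ ∘ X_k`, and
a layer can be normalized without losing any function of this span. In the first layer,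
`σ(a * x) = |a| * σ(x) + min a 0 * x` with `x = t + b / a`, and the last summand is affine in `t`.
In a deeper layer, every pre-activation is a positive multiple of one whose `t`-coefficient lies in
`{-1, 0, 1}`, and `σ` commutes with positive scalings. So the layers can be normalized one after
the other, each rewritten over the normalized layer below it.
-/

theorem relu_neg (x : ℝ) : relu (-x) = relu x - x := by
  rw [relu, relu, ← max_sub_sub_right, sub_self, zero_sub, max_comm]

theorem relu_mul_of_nonneg {a : ℝ} (ha : 0 ≤ a) (x : ℝ) : relu (a * x) = a * relu x := by
  rw [relu, relu, mul_max_of_nonneg _ _ ha, mul_zero]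

theorem relu_mul (a x : ℝ) : relu (a * x) = |a| * relu x + min a 0 * x := by
  rcases le_total 0 a with ha | ha
  · rw [relu_mul_of_nonneg ha, abs_of_nonneg ha, min_eq_right ha, zero_mul, add_zero]
  · rw [← neg_mul_neg, relu_mul_of_nonneg (neg_nonneg.mpr ha), relu_neg, abs_of_nonpos ha,
      min_eq_left ha]
    ring

section Span

variable {ι κ : Type*}

/-- The functions of `t` that an output neuron can compute from a hidden layer with pre-activations
`X` and a source channel: the linear span of `1`, of `t`, and of the activations `σ(X_k(t))`. -/
def reluSpan (X : ℝ → ι → ℝ) : Submodule ℝ (ℝ → ℝ) :=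
  Submodule.span ℝ (insert 1 (insert id (Set.range fun k t => relu (X t k))))

theorem mem_reluSpan_iff [Fintype ι] {X : ℝ → ι → ℝ} {f : ℝ → ℝ} :
    f ∈ reluSpan X ↔
      ∃ (a : ι → ℝ) (c b : ℝ), ∀ t, f t = (∑ k, a k * relu (X t k)) + t * c + b := by
  simp only [reluSpan, Submodule.mem_span_insert, Submodule.mem_span_range_iff_exists_fun]
  constructor
  · rintro ⟨b, _, ⟨c, _, ⟨a, rfl⟩, rfl⟩, rfl⟩
    refine ⟨a, c, b, fun t => ?_⟩
    simp only [Pi.add_apply, Pi.smul_apply, Finset.sum_apply, Pi.one_apply, id, smul_eq_mul]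
    ring
  · rintro ⟨a, c, b, hf⟩
    refine ⟨b, _, ⟨c, _, ⟨a, rfl⟩, rfl⟩, funext fun t => ?_⟩
    simp only [hf, Pi.add_apply, Pi.smul_apply, Finset.sum_apply, Pi.one_apply, id, smul_eq_mul]
    ring

theorem relu_mem_reluSpan (X : ℝ → ι → ℝ) (k : ι) : (fun t => relu (X t k)) ∈ reluSpan X :=
  Submodule.subset_span (.inr (.inr (Set.mem_range_self k)))

theorem affine_mem_reluSpan (X : ℝ → ι → ℝ) (c b : ℝ) : (fun t => t * c + b) ∈ reluSpan X := by
  have h_id : id ∈ reluSpan X := Submodule.subset_span (.inr (.inl rfl))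
  have h_one : 1 ∈ reluSpan X := Submodule.subset_span (.inl rfl)
  convert add_mem (Submodule.smul_mem _ c h_id) (Submodule.smul_mem _ b h_one) using 1
  ext t
  simp [mul_comm]

theorem reluSpan_le_reluSpan {X : ℝ → ι → ℝ} {Y : ℝ → κ → ℝ}
    (h : ∀ k, (fun t => relu (X t k)) ∈ reluSpan Y) : reluSpan X ≤ reluSpan Y := by
  refine Submodule.span_le.mpr
    (Set.insert_subset ?_ (Set.insert_subset ?_ (Set.range_subset_iff.mpr h)))
  · exact Submodule.subset_span (.inl rfl)
  · exact Submodule.subset_span (.inr (.inl rfl))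

theorem reluSpan_affine_le_reluSpan_translate (a b : ι → ℝ) :
    reluSpan (fun t i => t * a i + b i) ≤ reluSpan fun t i => t + b i / a i := by
  refine reluSpan_le_reluSpan fun i => ?_
  by_cases ha : a i = 0
  · -- The neuron is constant, so the value `b i / 0 = 0` of its new bias is irrelevant.
    simpa [ha] using affine_mem_reluSpan (fun t i => t + b i / a i) 0 (relu (b i))
  · have h_relu := relu_mem_reluSpan (fun t i => t + b i / a i) i
    have h_affine :=
      affine_mem_reluSpan (fun t i => t + b i / a i) (min (a i) 0) (min (a i) 0 * (b i / a i))
    convert add_mem (Submodule.smul_mem _ |a i| h_relu) h_affine using 1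
    ext t
    have h_factor : t * a i + b i = a i * (t + b i / a i) := by field_simp
    rw [h_factor, relu_mul, Pi.add_apply, Pi.smul_apply, smul_eq_mul]
    ring

end Span

theorem exists_pos_eq_mul_sign (c : ℝ) :
    ∃ d s : ℝ, 0 < d ∧ (s = -1 ∨ s = 0 ∨ s = 1) ∧ c = d * s := by
  rcases lt_trichotomy c 0 with hc | rfl | hc
  · exact ⟨-c, -1, neg_pos.mpr hc, by simp, by simp⟩
  · exact ⟨1, 0, one_pos, by simp, by simp⟩
  · exact ⟨c, 1, hc, by simp, by simp⟩

section Normalized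

variable {ι κ : Type*} [Fintype ι]

/-- `Y` is the family of pre-activations of a hidden layer in normalized form placed on top of a
layer with pre-activations `X`: `Y(t) = A σ(X(t)) + t s + b` with a sign vector `s`. -/
def IsNormalizedLayer (X : ℝ → ι → ℝ) (Y : ℝ → κ → ℝ) : Prop :=
  ∃ (A : κ → ι → ℝ) (b s : κ → ℝ),
    (∀ i, s i = -1 ∨ s i = 0 ∨ s i = 1) ∧
    ∀ t i, Y t i = (∑ k, A i k * relu (X t k)) + t * s i + b i

theorem exists_isNormalizedLayer_reluSpan_le {X : ℝ → ι → ℝ} {Y : ℝ → κ → ℝ}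
    (hY : ∀ i, (fun t => Y t i) ∈ reluSpan X) :
    ∃ Z : ℝ → κ → ℝ, IsNormalizedLayer X Z ∧ reluSpan Y ≤ reluSpan Z := by
  choose A c b hAcb using fun i => mem_reluSpan_iff.mp (hY i)
  choose d s hd hs hc using fun i => exists_pos_eq_mul_sign (c i)
  refine ⟨fun t i => Y t i / d i,
    ⟨fun i k => A i k / d i, fun i => b i / d i, s, hs, fun t i => ?_⟩,
    reluSpan_le_reluSpan fun i => ?_⟩
  · simp only [hAcb, hc, div_mul_eq_mul_div, ← Finset.sum_div]
    field [(hd i).ne']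
  · have h_scale : (fun t => relu (Y t i)) = d i • fun t => relu (Y t i / d i) := by
      ext t
      rw [Pi.smul_apply, smul_eq_mul, ← relu_mul_of_nonneg (hd i).le, mul_div_cancel₀ _ (hd i).ne']
    rw [h_scale]
    exact Submodule.smul_mem _ _ (relu_mem_reluSpan (fun t i => Y t i / d i) i)

end Normalized

theorem exists_forall_isNormalizedLayer_reluSpan_le {ι : ℕ → Type*} [∀ ℓ, Fintype (ι ℓ)]
    {F : (ℓ : ℕ) → ℝ → ι ℓ → ℝ} {a b : ι 1 → ℝ} (hF₁ : ∀ t i, F 1 t i = t * a i + b i)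
    {m : ℕ} (hm : 1 ≤ m)
    (hF : ∀ ℓ, 2 ≤ ℓ → ℓ ≤ m → ∀ i, (fun t => F ℓ t i) ∈ reluSpan (F (ℓ - 1))) :
    ∃ (G : (ℓ : ℕ) → ℝ → ι ℓ → ℝ) (β : ι 1 → ℝ),
      (∀ t i, G 1 t i = t + β i) ∧
      (∀ ℓ, 2 ≤ ℓ → ℓ ≤ m → IsNormalizedLayer (G (ℓ - 1)) (G ℓ)) ∧
      reluSpan (F m) ≤ reluSpan (G m) := by
  induction m, hm using Nat.le_induction with
  | base =>
    refine ⟨Function.update F 1 fun t i => t + b i / a i, fun i => b i / a i, by simp,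
      fun ℓ _ _ => by omega, ?_⟩
    rw [Function.update_self, show F 1 = fun t i => t * a i + b i from funext₂ hF₁]
    exact reluSpan_affine_le_reluSpan_translate a b
  | succ m hm ih =>
    obtain ⟨G, β, hG₁, hG, h_le⟩ := ih fun ℓ h₂ hℓ => hF ℓ h₂ (by omega)
    obtain ⟨Z, hZ, hFZ⟩ :=
      exists_isNormalizedLayer_reluSpan_le fun i => h_le (hF (m + 1) (by omega) le_rfl i)
    have h_old : ∀ ℓ, ℓ ≤ m → Function.update G (m + 1) Z ℓ = G ℓ := fun ℓ hℓ =>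
      Function.update_of_ne (by omega) _ _
    refine ⟨Function.update G (m + 1) Z, β, ?_, fun ℓ h₂ hℓ => ?_, ?_⟩
    · rwa [h_old 1 hm]
    · rw [h_old (ℓ - 1) (by omega)]
      rcases Nat.le_succ_iff.mp hℓ with hℓ | rfl
      · rw [h_old ℓ hℓ]
        exact hG ℓ h₂ hℓ
      · rwa [Function.update_self]
    · rwa [Function.update_self]

/-- every `f_L ∈ Y_{n₁,…,n_{L−1}}` admits a normalized representation with
first layer `F₁(t) = t·𝟙 + b¹` and source-channel coefficients that are sign vectors
`s^ℓ ∈ {−1,0,1}^{n_ℓ}` at every hidden layer `ℓ = 2,…,L−1`. -/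
theorem deep_relu_normalized_form (L : ℕ) (hL : 2 ≤ L) (n : ℕ → ℕ) (f : ℝ → ℝ)
    (hf : IsDeepReLU L n f) :
    ∃ (F : (ℓ : ℕ) → ℝ → Fin (n ℓ) → ℝ)
      (b1 : Fin (n 1) → ℝ)
      (A : (ℓ : ℕ) → Fin (n ℓ) → Fin (n (ℓ - 1)) → ℝ)
      (b s : (ℓ : ℕ) → Fin (n ℓ) → ℝ)
      (AL : Fin (n (L - 1)) → ℝ) (cL bL : ℝ),
      (∀ ℓ, 2 ≤ ℓ → ℓ ≤ L - 1 → ∀ i, s ℓ i = -1 ∨ s ℓ i = 0 ∨ s ℓ i = 1) ∧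
      (∀ t i, F 1 t i = t + b1 i) ∧
      (∀ ℓ, 2 ≤ ℓ → ℓ ≤ L - 1 → ∀ t i,
        F ℓ t i = (∑ k, A ℓ i k * relu (F (ℓ - 1) t k)) + t * s ℓ i + b ℓ i) ∧
      (∀ t, f t = (∑ k, AL k * relu (F (L - 1) t k)) + t * cL + bL) := by
  obtain ⟨F, A₁, A, b, c, AL, cL, bL, hF₁, hF, hf⟩ := hf
  obtain ⟨G, β, hG₁, hG, h_le⟩ :=
    exists_forall_isNormalizedLayer_reluSpan_le hF₁ (Nat.le_sub_one_of_lt hL) fun ℓ h₂ hℓ i =>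
      mem_reluSpan_iff.mpr ⟨A ℓ i, c ℓ i, b ℓ i, fun t => hF ℓ h₂ hℓ t i⟩
  choose! A' b' s' hs' hG' using hG
  obtain ⟨AL', cL', bL', hf'⟩ := mem_reluSpan_iff.mp (h_le (mem_reluSpan_iff.mpr ⟨AL, cL, bL, hf⟩))
  exact ⟨G, β, A', b', s', AL', cL', bL', hs', hG₁, hG', hf'⟩
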